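/- Let q > 2 be a prime power and K a finite field with q² elements, and let λ be a generator of K*. Let 𝒰 be a unital in PG(2,q²) that contains the points O = (0:0:1) and Y∞ = (0:1:0), whose tangent line at O is X₂ = 0 and whose tangent line at Y∞ is X₃ = 0, and which is preserved by the projectivity induced by the diagonal matrix diag(λ, λ^{q+1}, 1). Then there exists b ∈ K* such that 𝒰 = {(x₁:x₂:x₃) ∈ PG(2,q²) : x₁^{q+1} = b·x₂^q·x₃ + b^q·x₂·x₃^q}; in particular 𝒰 is a classical unital. -/

import Mathlib

open Projectivization
open scoped LinearAlgebra.Projectivization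

variable (K : Type*) [Field K]

/-- The point set of `PG(2,K)`. -/
abbrev PGPt := ℙ K (Fin 3 → K)

/-- A line of `PG(2,K)`: a 2-dimensional subspace of `K³`. -/
def PGLn := {W : Submodule K (Fin 3 → K) // Module.finrank K W = 2}

variable {K}

/-- Incidence between points and lines of `PG(2,K)`. -/
def PGMem (P : PGPt K) (L : PGLn K) : Prop := P.submodule ≤ L.1

/-- A unital in `PG(2,q²)`: a set of `q³+1` points meeting every line in `1` or `q+1` points. -/
def IsUnital (q : ℕ) (U : Set (PGPt K)) : Prop :=
  U.ncard = q ^ 3 + 1 ∧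
    ∀ L : PGLn K, {P ∈ U | PGMem P L}.ncard = 1 ∨ {P ∈ U | PGMem P L}.ncard = q + 1

lemma projmap_mul (f g : (Fin 3 → K) ≃ₗ[K] (Fin 3 → K)) (P : PGPt K) :
    Projectivization.map f.toLinearMap f.injective
      (Projectivization.map g.toLinearMap g.injective P) =
    Projectivization.map (f * g).toLinearMap (f * g).injective P := by
  induction' P using Projectivization.ind with v hv
  rfl

lemma projmap_one (P : PGPt K) :
    Projectivization.map (1 : (Fin 3 → K) ≃ₗ[K] (Fin 3 → K)).toLinearMap
      (1 : (Fin 3 → K) ≃ₗ[K] (Fin 3 → K)).injective P = P := by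
  induction' P using Projectivization.ind with v hv
  rfl

/-- The permutation of the projective plane induced by a linear automorphism of `K³`. -/
def projPerm (e : (Fin 3 → K) ≃ₗ[K] (Fin 3 → K)) : Equiv.Perm (PGPt K) where
  toFun := Projectivization.map e.toLinearMap e.injective
  invFun := Projectivization.map e.symm.toLinearMap e.symm.injective
  left_inv := fun P => by
    rw [projmap_mul, show e.symm * e = 1 from LinearEquiv.ext fun v => e.symm_apply_apply v, projmap_one]
  right_inv := fun P => by
    rw [projmap_mul, show e * e.symm = 1 from LinearEquiv.ext fun v => e.apply_symm_apply v, projmap_one]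

/-- The homomorphism from linear automorphisms of `K³` to permutations of `PG(2,K)`;
its range is the group `PGL(3,K)` of projectivities, acting faithfully on the plane. -/
def projHom : ((Fin 3 → K) ≃ₗ[K] (Fin 3 → K)) →* Equiv.Perm (PGPt K) where
  toFun := projPerm
  map_one' := by ext P; exact projmap_one P
  map_mul' := fun f g => by ext P; exact (projmap_mul f g P).symm

/-- `PGL(3,K)` as a group of permutations of the plane. -/
def PGL3 (K : Type*) [Field K] : Subgroup (Equiv.Perm (PGPt K)) := (projHom (K := K)).range

/-- The subgroup of `PGL(3,K)` preserving a point set `U`. -/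
def presGroup (U : Set (PGPt K)) : Subgroup (Equiv.Perm (PGPt K)) where
  carrier := {σ | σ ∈ PGL3 K ∧ σ '' U = U}
  one_mem' := ⟨one_mem _, by simp⟩
  mul_mem' := fun {a b} ha hb => ⟨mul_mem ha.1 hb.1, by
    rw [show ⇑(a * b) = ⇑a ∘ ⇑b from rfl, Set.image_comp, hb.2, ha.2]⟩
  inv_mem' := fun {a} ha => ⟨inv_mem ha.1, by
    conv_lhs => rw [← ha.2]
    rw [show (a⁻¹ : Equiv.Perm (PGPt K)) = a.symm from rfl]
    exact Equiv.symm_image_image a U⟩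

/-- The stabiliser of two points inside the group preserving `U`. -/
def twoPtStab (U : Set (PGPt K)) (P Q : PGPt K) : Subgroup (Equiv.Perm (PGPt K)) where
  carrier := {σ | σ ∈ presGroup U ∧ σ P = P ∧ σ Q = Q}
  one_mem' := ⟨one_mem _, rfl, rfl⟩
  mul_mem' := fun {a b} ha hb => ⟨mul_mem ha.1 hb.1, by
    simp [Equiv.Perm.mul_apply, hb.2.1, ha.2.1], by simp [Equiv.Perm.mul_apply, hb.2.2, ha.2.2]⟩
  inv_mem' := fun {a} ha => ⟨inv_mem ha.1,
    by rw [Equiv.Perm.inv_def, Equiv.symm_apply_eq]; exact ha.2.1.symm,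
    by rw [Equiv.Perm.inv_def, Equiv.symm_apply_eq]; exact ha.2.2.symm⟩

/-- The classical (Hermitian) unital: image of the Hermitian curve
`x^{q+1} + y^{q+1} + z^{q+1} = 0` under an element of `PGL(3,K)`. -/
def IsClassicalUnital (q : ℕ) (U : Set (PGPt K)) : Prop :=
  ∃ σ ∈ PGL3 K, σ '' {P : PGPt K |
    P.rep 0 ^ (q + 1) + P.rep 1 ^ (q + 1) + P.rep 2 ^ (q + 1) = 0} = U

/-- The diagonal linear automorphism `diag(λ, λ^{q+1}, 1)` of `K³`. -/
def diagEquiv {K : Type*} [Field K] (q : ℕ) (u : Kˣ) :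
    (Fin 3 → K) ≃ₗ[K] (Fin 3 → K) :=
  LinearEquiv.piCongrRight (fun i => LinearEquiv.smulOfUnit (![u, u ^ (q + 1), 1] i))

lemma diagEquiv_apply {K : Type*} [Field K] (q : ℕ) (u : Kˣ) (v : Fin 3 → K) (i : Fin 3) :
    diagEquiv q u v i = (![u, u ^ (q + 1), 1] i : Kˣ) * v i := rfl

/-!
Write the affine points of `U` with `x ≠ 0` as `(x, z x ^ (q + 1))`. The slopes `z` form a set `A`
that does not depend on `x`, because `diag(λ, λ ^ (q + 1), 1)` preserves `U`. On `x = 0`, after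
scaling `y`, the affine points of `U` are exactly the subfield `F` of order `q`. The line
`y = x + k` meets `U` in `1` modulo `q` points, so for `k ≠ 0` the number of pairs `(z, x)` in
`A × K` with `z x ^ (q + 1) - x = k` is, modulo `q`, `0` if `k ∈ F` and `1` otherwise. Evaluating
`∑ (z x ^ (q + 1) - x) ^ e` in two ways, for `e = q (q - 1 - a) + (q - 1 - b)`, therefore gives the
power sums of `Tr (x z)` over `z ∈ A`: those of exponent less than `q - 1` vanish, and that of
exponent `q - 1` is `-Tr x ^ (q - 1)`. Hence every `F`-linear functional not killing `1` maps `A`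
onto `F`. As `A` has only `q` elements, such a functional is injective on `A`, so all differences of
elements of `A` lie in `F`. So `A` is a coset of `F`, and `U` has the affine equation
`y ^ q - y = δ x ^ (q + 1)`, which is the Hermitian one up to scaling.
-/

section BinomialCoefficients

theorem cast_choose_prime_pow_sub {R : Type*} [CommRing R] (p : ℕ) [Fact p.Prime] [CharP R p]
    (h : ℕ) {a b : ℕ} (hab : a + b ≤ p ^ h) (hb : b < p ^ h) :
    ((p ^ h - a).choose b : R) = (-1) ^ b * a.multichoose b := by
  induction a generalizing b with
  | zero =>
    rcases eq_or_ne b 0 with rfl | hb0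
    · simp
    · obtain ⟨c, rfl⟩ := Nat.exists_eq_succ_of_ne_zero hb0
      rw [Nat.sub_zero, Nat.multichoose_zero_succ, Nat.cast_zero, mul_zero,
        CharP.cast_eq_zero_iff R p]
      exact (Fact.out : p.Prime).dvd_choose_pow hb0 hb.ne
  | succ a iha =>
    induction b with
    | zero => simp
    | succ b ihb =>
      have pascal : (p ^ h - a).choose (b + 1) =
          (p ^ h - (a + 1)).choose b + (p ^ h - (a + 1)).choose (b + 1) := by
        rw [← Nat.choose_succ_succ, ← Nat.sub_sub, Nat.succ_eq_add_one,
          Nat.sub_add_cancel (by omega)]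
      have := iha (b := b + 1) (by omega) hb
      rw [pascal, Nat.cast_add, ihb (by omega) (by omega)] at this
      rw [Nat.multichoose_succ_succ, Nat.cast_add]
      linear_combination this

theorem cast_choose_card_sub_one_sub {F R : Type*} [Field F] [Fintype F] [CommRing R] [Algebra F R]
    [Nontrivial R] {a b : ℕ} (hab : a + b < Fintype.card F) :
    ((Fintype.card F - 1 - a).choose b : R) = (-1) ^ b * (a + b).choose b := by
  obtain ⟨p, hchar, n, hp, hcard⟩ := FiniteField.card' F
  have := Fact.mk hp
  have := charP_of_injective_algebraMap (algebraMap F R).injective p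
  rw [hcard] at hab ⊢
  rw [Nat.sub_sub, add_comm 1 a, cast_choose_prime_pow_sub p n (by omega) (by omega),
    Nat.multichoose_eq]
  congr 3
  omega

end BinomialCoefficients

section PowerSums

theorem sum_pow_of_ne_zero {K : Type*} [Field K] [Fintype K] {e : ℕ} (he : e ≠ 0) :
    ∑ x : K, x ^ e = if Fintype.card K - 1 ∣ e then -1 else 0 := by
  classical
  have sum_units : ∑ x : Kˣ, (x : K) ^ e = ∑ x ∈ Finset.univ.erase (0 : K), x ^ e :=
    Finset.sum_bij (fun x _ ↦ x) (by simp) (fun _ _ _ _ ↦ Units.ext)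
      (fun x hx ↦ ⟨Units.mk0 x (Finset.ne_of_mem_erase hx), by simp, rfl⟩) (by simp)
  rw [← FiniteField.sum_pow_units K e, ← Finset.sum_erase_add _ _ (Finset.mem_univ (0 : K)),
    zero_pow he, add_zero, sum_units]

/-- Expand `∑ i ∈ s, (f i - v) ^ (card F - 1)`: only the leading term survives, whereas if `v` were
missed every summand would be `1`. -/
theorem exists_eq_of_sum_pow_eq_zero {F ι : Type*} [Field F] [Fintype F] {s : Finset ι} {f : ι → F}
    (hlt : ∀ n < Fintype.card F - 1, ∑ i ∈ s, f i ^ n = 0)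
    (htop : ∑ i ∈ s, f i ^ (Fintype.card F - 1) ≠ 0) (v : F) : ∃ i ∈ s, f i = v := by
  by_contra! hv
  apply htop
  have hpos : 0 < Fintype.card F - 1 := Nat.sub_pos_of_lt Fintype.one_lt_card
  have hcard : ∑ _ ∈ s, (1 : F) = 0 := by simpa using hlt 0 hpos
  have expand : ∑ i ∈ s, (f i - v) ^ (Fintype.card F - 1) =
      ∑ i ∈ s, f i ^ (Fintype.card F - 1) := by
    simp only [sub_eq_add_neg, add_pow]
    rw [Finset.sum_comm, Finset.sum_range_succ]
    simp only [mul_assoc, ← Finset.sum_mul]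
    simp only [Nat.sub_self, pow_zero, Nat.choose_self, Nat.cast_one, mul_one, add_eq_right]
    exact Finset.sum_eq_zero fun n hn ↦ by rw [hlt n (Finset.mem_range.1 hn), zero_mul]
  rw [← expand, ← hcard]
  exact Finset.sum_congr rfl fun i hi ↦
    FiniteField.pow_card_sub_one_eq_one _ (sub_ne_zero.2 (hv i hi))

end PowerSums

section DiagonalUnital

/-- The affine part (`X₃ = 1`) of a unital of `PG(2, n ^ 2)` that is tangent to `X₂ = 0` at
`(0 : 0 : 1)` and to `X₃ = 0` at `(0 : 1 : 0)` and is preserved by every `diag(μ, μ ^ (n + 1), 1)`.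
A vertical line loses its point `(0 : 1 : 0)`, whence the counts `0` and `n`. -/
structure IsDiagonalUnital {K : Type*} [Field K] (n : ℕ) (S : Set (K × K)) : Prop where
  zero_mem : (0, 0) ∈ S
  eq_zero_of_mem {x : K} : (x, 0) ∈ S → x = 0
  mul_mem {μ x y : K} : μ ≠ 0 → (x, y) ∈ S → (μ * x, μ ^ (n + 1) * y) ∈ S
  ncard_line (m k : K) :
    {x | (x, m * x + k) ∈ S}.ncard = 1 ∨ {x | (x, m * x + k) ∈ S}.ncard = n + 1
  ncard_vertical (x : K) : {y | (x, y) ∈ S}.ncard = 0 ∨ {y | (x, y) ∈ S}.ncard = n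

namespace IsDiagonalUnital

variable {K : Type*} [Field K] {n : ℕ} {S : Set (K × K)}

theorem mem_one_div_iff (hS : IsDiagonalUnital n S) {x y : K} (hx : x ≠ 0) :
    (1, y / x ^ (n + 1)) ∈ S ↔ (x, y) ∈ S := by
  have hpow := pow_ne_zero (n + 1) hx
  refine ⟨fun h ↦ ?_, fun h ↦ ?_⟩
  · simpa [mul_div_cancel₀ _ hpow] using hS.mul_mem hx h
  · simpa [hx, div_eq_inv_mul] using hS.mul_mem (inv_ne_zero hx) h

theorem rescale (hS : IsDiagonalUnital n S) {c : K} (hc : c ≠ 0) :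
    IsDiagonalUnital n {P : K × K | (P.1, c * P.2) ∈ S} where
  zero_mem := by simpa using hS.zero_mem
  eq_zero_of_mem h := hS.eq_zero_of_mem (by simpa using h)
  mul_mem hμ h := by simpa only [Set.mem_ofPred_eq, mul_left_comm] using hS.mul_mem hμ h
  ncard_line m k := by
    simpa only [Set.mem_ofPred_eq, mul_add, mul_assoc] using hS.ncard_line (c * m) (c * k)
  ncard_vertical x := by
    have himage : (c * ·) '' {y | (x, c * y) ∈ S} = {y | (x, y) ∈ S} :=
      Set.image_preimage_eq {y | (x, y) ∈ S} (mul_left_surjective₀ hc)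
    have hcard : {y | (x, c * y) ∈ S}.ncard = {y | (x, y) ∈ S}.ncard := by
      rw [← himage, Set.ncard_image_of_injective _ (mul_right_injective₀ hc)]
    simpa only [Set.mem_ofPred_eq, hcard] using hS.ncard_vertical x

open scoped Classical in
theorem card_slope_solutions [Fintype K] (hS : IsDiagonalUnital n S) {k : K} (hk : k ≠ 0) :
    Finset.card {e ∈ {z : K | (1, z) ∈ S}.toFinset ×ˢ Finset.univ |
      e.1 * e.2 ^ (n + 1) - e.2 = k} = ({x | (x, x + k) ∈ S}.toFinset.erase 0).card := by
  have solve {z x : K} (h : z * x ^ (n + 1) - x = k) : x ≠ 0 ∧ (x + k) / x ^ (n + 1) = z := by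
    have hx : x ≠ 0 := by
      rintro rfl
      exact hk (by simp [← h])
    exact ⟨hx, by rw [div_eq_iff (pow_ne_zero _ hx), ← h, add_sub_cancel]⟩
  refine Finset.card_nbij' Prod.snd (fun x ↦ ((x + k) / x ^ (n + 1), x)) ?_ ?_ ?_ ?_
  · rintro ⟨z, x⟩ h
    simp only [Finset.coe_filter, Finset.mem_product, Set.mem_toFinset, Set.mem_ofPred_eq] at h
    obtain ⟨hx, rfl⟩ := solve h.2
    exact Finset.mem_erase.2 ⟨hx, Set.mem_toFinset.2 ((hS.mem_one_div_iff hx).1 h.1.1)⟩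
  · intro x hx
    obtain ⟨hx0, hx⟩ := Finset.mem_erase.1 hx
    have hxS : (x, x + k) ∈ S := by simpa using hx
    simp only [Finset.coe_filter, Finset.mem_product, Set.mem_toFinset, Set.mem_ofPred_eq]
    exact ⟨⟨(hS.mem_one_div_iff hx0).2 hxS, Finset.mem_univ _⟩,
      by rw [div_mul_cancel₀ _ (pow_ne_zero _ hx0), add_sub_cancel_left]⟩
  · rintro ⟨z, x⟩ h
    exact Prod.ext (solve (Finset.mem_filter.1 h).2).2 rfl
  · exact fun x _ ↦ rfl

end IsDiagonalUnital

end DiagonalUnital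

section ExponentArithmetic

theorem succ_sq_sub_one (r : ℕ) : (r + 1) ^ 2 - 1 = (r + 1) * r + r := by
  have : (r + 1) ^ 2 = (r + 1) * r + r + 1 := by ring
  omega

theorem sq_sub_one_dvd_mul_add_iff {q s t : ℕ} (hs : s < 2 * (q - 1)) (ht : t < 2 * (q - 1))
    (hst : s + t ≠ 0) : q ^ 2 - 1 ∣ q * s + t ↔ s = q - 1 ∧ t = q - 1 := by
  obtain ⟨r, rfl⟩ : ∃ r, q = r + 1 := ⟨q - 1, by omega⟩
  simp only [Nat.add_sub_cancel] at hs ht ⊢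
  rw [succ_sq_sub_one]
  refine ⟨?_, fun ⟨hsr, htr⟩ ↦ by rw [hsr, htr]⟩
  rintro ⟨w, hw⟩
  obtain rfl : w = 1 := by
    have hw0 : w ≠ 0 := by
      rintro rfl
      have := Nat.le_mul_of_pos_left s r.add_one_pos
      omega
    have hw2 : w < 2 := by
      by_contra! h
      linarith [Nat.mul_le_mul_left ((r + 1) * r + r) h, Nat.mul_le_mul_left (r + 1) hs]
    omega
  obtain h | h | h := lt_trichotomy s r
  · nlinarith
  · subst h; omega
  · nlinarith

theorem mul_sub_add_sub_lt_sq_sub_one {q a b : ℕ} (hpos : 0 < a + b) (hlt : a + b < q) :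
    q * (q - 1 - a) + (q - 1 - b) < q ^ 2 - 1 := by
  obtain ⟨r, rfl⟩ : ∃ r, q = r + 1 := ⟨q - 1, by omega⟩
  rw [succ_sq_sub_one, Nat.add_sub_cancel]
  have hsub : (r + 1) * (r - a) + (r + 1) * a = (r + 1) * r := by
    rw [← mul_add, Nat.sub_add_cancel (by omega)]
  have ha : a ≤ (r + 1) * a := Nat.le_mul_of_pos_left a r.add_one_pos
  omega

theorem sub_one_dvd_mul_sub_add_sub_iff {q a b : ℕ} (hpos : 0 < a + b) (hlt : a + b < q) :
    q - 1 ∣ q * (q - 1 - a) + (q - 1 - b) ↔ a + b = q - 1 := by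
  obtain ⟨r, rfl⟩ : ∃ r, q = r + 1 := ⟨q - 1, by omega⟩
  have split : (r + 1) * (r - a) + (r - b) = r * (r - a) + ((r - a) + (r - b)) := by ring
  rw [Nat.add_sub_cancel, split, Nat.dvd_add_right (Dvd.intro _ rfl)]
  refine ⟨?_, fun h ↦ by rw [show r - a + (r - b) = r by omega]⟩
  rintro ⟨w, hw⟩
  have hw2 : w < 2 := by
    by_contra! h
    have := Nat.mul_le_mul_left r h
    omega
  interval_cases w <;> omega

end ExponentArithmetic

section QuadraticExtension

theorem finite_of_finrank_eq_two {F K : Type*} [Field F] [Finite F] [Field K] [Algebra F K]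
    (hrank : Module.finrank F K = 2) : Finite K :=
  have := Module.finite_of_finrank_eq_succ hrank
  Module.finite_of_finite F

variable {F K : Type*} [Field F] [Fintype F] [Field K] [Algebra F K]

local notation "q" => Fintype.card F

theorem sub_pow_card (x y : K) : (x - y) ^ q = x ^ q - y ^ q :=
  map_sub (FiniteField.frobeniusAlgHom F K) x y

theorem card_eq_sq_of_finrank_eq_two [Fintype K] (hrank : Module.finrank F K = 2) :
    Fintype.card K = q ^ 2 := by
  rw [Module.card_eq_pow_finrank (K := F), hrank]

theorem pow_card_pow_card (hrank : Module.finrank F K = 2) (x : K) : (x ^ q) ^ q = x := by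
  have := finite_of_finrank_eq_two hrank
  let _ := Fintype.ofFinite K
  rw [← pow_mul, ← sq, ← card_eq_sq_of_finrank_eq_two hrank, FiniteField.pow_card]

theorem mul_pow_card_succ_sub_pow_eq_sum (hrank : Module.finrank F K = 2)
    (i j : ℕ) (z x : K) :
    (z * x ^ (q + 1) - x) ^ (q * i + j) =
      ∑ e ∈ Finset.range (i + 1) ×ˢ Finset.range (j + 1),
        (i.choose e.1 * j.choose e.2 * ((-1) ^ (i - e.1) * (-1) ^ (j - e.2)) *
          z ^ (q * e.1 + e.2)) * x ^ (q * (i + e.2) + (j + e.1)) := by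
  have conj : (z * x ^ (q + 1) - x) ^ q = x ^ q * (z ^ q * x + -1) := by
    rw [sub_pow_card, mul_pow, pow_succ x, mul_pow, pow_card_pow_card hrank]
    ring
  have self : z * x ^ (q + 1) - x = x * (z * x ^ q + -1) := by ring
  rw [pow_add, pow_mul, conj, self, mul_pow, mul_pow, add_pow, add_pow, mul_mul_mul_comm,
    Finset.sum_mul_sum, Finset.sum_product, Finset.mul_sum]
  simp only [Finset.mul_sum]
  refine Finset.sum_congr rfl fun α _ ↦ Finset.sum_congr rfl fun β _ ↦ ?_
  ring

/-- Only the monomial with `x`-exponent `q ^ 2 - 1` contributes to the sum over `x`. -/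
theorem sum_mul_pow_card_succ_sub_pow [Fintype K] (hrank : Module.finrank F K = 2) {a b : ℕ}
    (hpos : 0 < a + b) (hlt : a + b < q) (z : K) :
    ∑ x : K, (z * x ^ (q + 1) - x) ^ (q * (q - 1 - a) + (q - 1 - b)) =
      -((q - 1 - a).choose b * (q - 1 - b).choose a * z ^ (q * b + a)) := by
  have dvd_iff : ∀ α ≤ q - 1 - a, ∀ β ≤ q - 1 - b,
      (q ^ 2 - 1 ∣ q * (q - 1 - a + β) + (q - 1 - b + α) ↔ α = b ∧ β = a) := fun α hα β hβ ↦ by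
    rw [sq_sub_one_dvd_mul_add_iff (by omega) (by omega) (by omega)]
    omega
  have exponent_ne_zero (α β : ℕ) : q * (q - 1 - a + β) + (q - 1 - b + α) ≠ 0 := by
    have := Nat.le_mul_of_pos_left (q - 1 - a + β) (Fintype.card_pos (α := F))
    omega
  simp only [mul_pow_card_succ_sub_pow_eq_sum hrank]
  rw [Finset.sum_comm, Finset.sum_eq_single (b, a)]
  · have sign : ((-1 : K)) ^ (q - 1 - a - b) * (-1) ^ (q - 1 - b - a) = 1 := by
      rw [Nat.sub_right_comm, ← mul_pow, neg_one_mul, neg_neg, one_pow]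
    rw [← Finset.mul_sum, sum_pow_of_ne_zero (exponent_ne_zero _ _),
      card_eq_sq_of_finrank_eq_two hrank,
      if_pos ((dvd_iff b (by omega) a (by omega)).2 ⟨rfl, rfl⟩), sign]
    ring
  · rintro ⟨α, β⟩ hmem hne
    rw [Finset.mem_product, Finset.mem_range, Finset.mem_range] at hmem
    rw [← Finset.mul_sum, sum_pow_of_ne_zero (exponent_ne_zero _ _),
      card_eq_sq_of_finrank_eq_two hrank, if_neg fun h ↦ hne (Prod.ext_iff.2 <|
        (dvd_iff α (Nat.le_of_lt_succ hmem.1) β (Nat.le_of_lt_succ hmem.2)).1 h), mul_zero]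
  · intro hmem
    simp only [Finset.mem_product, Finset.mem_range] at hmem
    omega

theorem algebraMap_trace_eq_add_pow_card (hrank : Module.finrank F K = 2) (x : K) :
    algebraMap F K (Algebra.trace F K x) = x + x ^ q := by
  have := finite_of_finrank_eq_two hrank
  rw [FiniteField.algebraMap_trace_eq_sum_pow, hrank, Finset.sum_range_succ, Finset.sum_range_one,
    Nat.card_eq_fintype_card, pow_zero, pow_one, pow_one]

variable (F) in
/-- The slopes `z` arise from points `(x, z x ^ (q + 1))` of an affine unital: such a point lies on
the line `y = x + k` iff `z x ^ (q + 1) - x = k`. For a unital containing the points `(0, y)` with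
`y ∈ F`, the number of solutions is `1 - [k ∈ F]` modulo `q`. -/
def IsSlopeSet [Fintype K] (A : Finset K) : Prop :=
  open scoped Classical in ∀ k : K, k ≠ 0 →
    (Finset.card {e ∈ A ×ˢ Finset.univ | e.1 * e.2 ^ (q + 1) - e.2 = k} : K) =
      if k ∈ Set.range (algebraMap F K) then 0 else 1

theorem sum_pow_notMem_range_algebraMap [Fintype K] [DecidablePred (· ∈ Set.range (algebraMap F K))]
    {e : ℕ} (he : e < Fintype.card K - 1) :
    ∑ k : K, k ^ e * (if k ∈ Set.range (algebraMap F K) then 0 else 1) =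
      -algebraMap F K (∑ c : F, c ^ e) := by
  classical
  have sum_range : ∑ k : K with k ∈ Set.range (algebraMap F K), k ^ e =
      ∑ c : F, algebraMap F K c ^ e := by
    rw [← Finset.sum_image (f := (· ^ e)) (algebraMap F K).injective.injOn]
    exact Finset.sum_congr (by ext; simp) fun _ _ ↦ rfl
  have sum_all := FiniteField.sum_pow_lt_card_sub_one K e he
  rw [← Finset.sum_filter_add_sum_filter_not _ (· ∈ Set.range (algebraMap F K)), sum_range]
    at sum_all
  simp only [mul_ite, mul_zero, mul_one, Finset.sum_ite, Finset.sum_const_zero, zero_add, map_sum,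
    map_pow]
  exact eq_neg_of_add_eq_zero_right sum_all

namespace IsSlopeSet

variable [Fintype K] {A : Finset K}

/-- Both sides evaluate the sum of `(z x ^ (q + 1) - x) ^ e` over `z ∈ A` and `x ∈ K`. -/
theorem choose_mul_choose_mul_sum_pow (hA : IsSlopeSet F A) (hrank : Module.finrank F K = 2)
    {a b : ℕ} (hpos : 0 < a + b) (hlt : a + b < q) :
    ((q - 1 - a).choose b * (q - 1 - b).choose a * ∑ z ∈ A, z ^ (q * b + a) : K) =
      if a + b = q - 1 then -1 else 0 := by
  classical
  set e := q * (q - 1 - a) + (q - 1 - b) with e_def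
  have he : e ≠ 0 := by
    have := Nat.le_mul_of_pos_left (q - 1 - a) (Fintype.card_pos (α := F))
    omega
  have he_lt : e < Fintype.card K - 1 := by
    rw [card_eq_sq_of_finrank_eq_two hrank]
    exact mul_sub_add_sub_lt_sq_sub_one hpos hlt
  have by_slope : ∑ z ∈ A, ∑ x : K, (z * x ^ (q + 1) - x) ^ e =
      -((q - 1 - a).choose b * (q - 1 - b).choose a * ∑ z ∈ A, z ^ (q * b + a) : K) := by
    rw [Finset.sum_congr rfl fun z _ ↦ sum_mul_pow_card_succ_sub_pow hrank hpos hlt z,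
      Finset.sum_neg_distrib, Finset.mul_sum]
  have by_value : ∑ z ∈ A, ∑ x : K, (z * x ^ (q + 1) - x) ^ e =
      ∑ k : K, k ^ e * (if k ∈ Set.range (algebraMap F K) then 0 else 1) := by
    rw [← Finset.sum_product', ← Finset.sum_fiberwise _ fun p ↦ p.1 * p.2 ^ (q + 1) - p.2]
    refine Finset.sum_congr rfl fun k _ ↦ ?_
    rw [Finset.sum_congr rfl fun p hp ↦ by rw [(Finset.mem_filter.1 hp).2], Finset.sum_const,
      nsmul_eq_mul, mul_comm]
    rcases eq_or_ne k 0 with rfl | hk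
    · simp [he]
    · rw [hA k hk]
  rw [by_slope, sum_pow_notMem_range_algebraMap he_lt, neg_inj, sum_pow_of_ne_zero he] at by_value
  rw [by_value, apply_ite (algebraMap F K), map_neg, map_one, map_zero]
  simp only [e_def, sub_one_dvd_mul_sub_add_sub_iff hpos hlt]

theorem choose_mul_sum_pow (hA : IsSlopeSet F A) (hrank : Module.finrank F K = 2)
    {a b : ℕ} (hpos : 0 < a + b) (hlt : a + b < q) :
    ((a + b).choose a * ∑ z ∈ A, z ^ (q * b + a) : K) =
      if a + b = q - 1 then -((a + b).choose a : K) else 0 := by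
  have key := hA.choose_mul_choose_mul_sum_pow hrank hpos hlt
  split_ifs at key ⊢ with htop
  · rw [show q - 1 - a = b by omega, show q - 1 - b = a by omega, Nat.choose_self,
      Nat.choose_self, Nat.cast_one, one_mul, one_mul] at key
    rw [key, mul_neg_one]
  · rw [cast_choose_card_sub_one_sub (F := F) hlt,
      cast_choose_card_sub_one_sub (F := F) (a := b) (by omega), add_comm b a,
      ← Nat.choose_symm_add] at key
    simpa using key

theorem sum_trace_mul_pow (hA : IsSlopeSet F A) (hrank : Module.finrank F K = 2) {n : ℕ}
    (hn : n ≠ 0) (hlt : n < q) (x : K) :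
    ∑ z ∈ A, Algebra.trace F K (x * z) ^ n =
      if n = q - 1 then -Algebra.trace F K x ^ n else 0 := by
  apply (algebraMap F K).injective
  have expand (y : K) : algebraMap F K (Algebra.trace F K y) ^ n =
      ∑ e ∈ Finset.HasAntidiagonal.antidiagonal n, (n.choose e.1 : K) * y ^ (q * e.2 + e.1) := by
    rw [algebraMap_trace_eq_add_pow_card hrank, (Commute.all _ _).add_pow']
    refine Finset.sum_congr rfl fun e _ ↦ ?_
    rw [nsmul_eq_mul, ← pow_mul, ← pow_add, add_comm e.1]
  calc algebraMap F K (∑ z ∈ A, Algebra.trace F K (x * z) ^ n)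
      = ∑ e ∈ Finset.HasAntidiagonal.antidiagonal n,
          x ^ (q * e.2 + e.1) * (n.choose e.1 * ∑ z ∈ A, z ^ (q * e.2 + e.1)) := by
        simp only [map_sum, map_pow, expand, mul_pow, Finset.mul_sum]
        rw [Finset.sum_comm]
        exact Finset.sum_congr rfl fun e _ ↦ Finset.sum_congr rfl fun z _ ↦ by ring
    _ = ∑ e ∈ Finset.HasAntidiagonal.antidiagonal n,
          x ^ (q * e.2 + e.1) * (if n = q - 1 then -(n.choose e.1 : K) else 0) := by
        refine Finset.sum_congr rfl fun e he ↦ ?_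
        obtain rfl := Finset.HasAntidiagonal.mem_antidiagonal.1 he
        rw [hA.choose_mul_sum_pow hrank (Nat.pos_of_ne_zero hn) hlt]
    _ = algebraMap F K (if n = q - 1 then -Algebra.trace F K x ^ n else 0) := by
        split_ifs
        · rw [map_neg, map_pow, expand, ← Finset.sum_neg_distrib]
          exact Finset.sum_congr rfl fun e _ ↦ by ring
        · simp only [mul_zero, Finset.sum_const_zero, map_zero]

end IsSlopeSet

theorem mem_span_sub_of_forall_surjOn {V : Type*} [AddCommGroup V] [Module F V] {A : Finset V}
    {e : V} (hcard : A.card ≤ q)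
    (hsurj : ∀ φ : Module.Dual F V, φ e ≠ 0 → Set.SurjOn φ A Set.univ) {a a' : V} (ha : a ∈ A)
    (ha' : a' ∈ A) (hne : a ≠ a') : e ∈ Submodule.span F {a - a'} := by
  by_contra he
  obtain ⟨φ, hφe, hφ⟩ := Submodule.exists_le_ker_of_notMem he
  have hinj : Set.InjOn φ A := Finset.injOn_of_surjOn_of_card_le φ (t := Finset.univ)
    (by simp [Set.MapsTo]) (by simpa using hsurj φ hφe) hcard
  have hφa : φ (a - a') = 0 := hφ (Submodule.mem_span_singleton_self _)
  exact hne (hinj ha ha' (sub_eq_zero.1 (by rwa [← map_sub])))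

theorem IsSlopeSet.eq_image_add [Fintype K] [DecidableEq K] {A : Finset K} (hA : IsSlopeSet F A)
    (hrank : Module.finrank F K = 2) (hcard : A.card = 0 ∨ A.card = q) :
    ∃ a₀, A = Finset.univ.image fun c : F ↦ a₀ + algebraMap F K c := by
  have hcard_zero : (A.card : F) = 0 := by
    obtain h | h := hcard <;> simp [h]
  have htwo : 1 < q := Fintype.one_lt_card
  have exists_trace_eq {x : K} (hx : Algebra.trace F K x ≠ 0) (c : F) :
      ∃ z ∈ A, Algebra.trace F K (x * z) = c := by
    refine exists_eq_of_sum_pow_eq_zero (fun n hn ↦ ?_) ?_ c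
    · rcases eq_or_ne n 0 with rfl | hn0
      · simpa using hcard_zero
      · rw [hA.sum_trace_mul_pow hrank hn0 (by omega), if_neg hn.ne]
    · rw [hA.sum_trace_mul_pow hrank (by omega) (by omega), if_pos rfl]
      exact neg_ne_zero.2 (pow_ne_zero _ hx)
  have hsurj (φ : Module.Dual F K) (hφ : φ 1 ≠ 0) : Set.SurjOn φ A Set.univ := by
    obtain ⟨x, rfl⟩ := ((Algebra.traceForm F K).toDual (traceForm_nondegenerate F K)).surjective φ
    rw [LinearMap.BilinForm.toDual_def, Algebra.traceForm_apply, mul_one] at hφ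
    exact fun c _ ↦ exists_trace_eq hφ c
  obtain ⟨x, hx⟩ := Algebra.trace_surjective F K 1
  obtain ⟨a₀, ha₀, -⟩ := exists_trace_eq (hx ▸ one_ne_zero) 0
  have hA_card : A.card = q := hcard.resolve_left (Finset.card_ne_zero_of_mem ha₀)
  refine ⟨a₀, Finset.eq_of_subset_of_card_le (fun a ha ↦ ?_) ?_⟩
  · rw [Finset.mem_image]
    rcases eq_or_ne a a₀ with rfl | hne
    · exact ⟨0, Finset.mem_univ _, by simp⟩
    · obtain ⟨c, hc⟩ := Submodule.mem_span_singleton.1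
        (mem_span_sub_of_forall_surjOn hA_card.le hsurj ha ha₀ hne)
      rw [Algebra.smul_def] at hc
      exact ⟨c⁻¹, Finset.mem_univ _, by
        rw [map_inv₀, inv_eq_of_mul_eq_one_right hc, add_sub_cancel]⟩
  · exact Finset.card_image_le.trans hA_card.ge

theorem mem_range_algebraMap_iff_pow_card_eq (hrank : Module.finrank F K = 2) {y : K} :
    y ∈ Set.range (algebraMap F K) ↔ y ^ q = y := by
  refine ⟨?_, fun hy ↦ ?_⟩
  · rintro ⟨c, rfl⟩
    rw [← map_pow, FiniteField.pow_card]
  · have := finite_of_finrank_eq_two hrank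
    obtain ⟨z, hz⟩ := Algebra.trace_surjective F K 1
    have trace_z := algebraMap_trace_eq_add_pow_card hrank z
    refine ⟨Algebra.trace F K (y * z), ?_⟩
    rw [hz, map_one] at trace_z
    rw [algebraMap_trace_eq_add_pow_card hrank, mul_pow, hy, ← mul_add, ← trace_z, mul_one]

theorem exists_pow_card_succ_eq_algebraMap (hrank : Module.finrank F K = 2) (t : F) :
    ∃ μ : K, μ ^ (q + 1) = algebraMap F K t := by
  have := finite_of_finrank_eq_two hrank
  obtain ⟨μ, rfl⟩ := FiniteField.norm_surjective F K t
  refine ⟨μ, ?_⟩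
  rw [FiniteField.algebraMap_norm_eq_pow_sum, hrank, Finset.sum_range_succ, Finset.sum_range_one,
    pow_zero, pow_one, Nat.card_eq_fintype_card, add_comm]

namespace IsDiagonalUnital

variable {S : Set (K × K)}

/-- As `μ` runs over `K*`, the multiplier `μ ^ (q + 1)` on the line `x = 0` runs over `F*`. -/
theorem exists_forall_zero_mul_mem_iff (hS : IsDiagonalUnital q S)
    (hrank : Module.finrank F K = 2) :
    ∃ c ≠ 0, ∀ y, (0, c * y) ∈ S ↔ y ∈ Set.range (algebraMap F K) := by
  have := finite_of_finrank_eq_two hrank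
  have hcard : {y | (0, y) ∈ S}.ncard = q :=
    (hS.ncard_vertical 0).resolve_left (Set.ncard_ne_zero_of_mem hS.zero_mem)
  obtain ⟨c, hcS, hc⟩ : ∃ c, (0, c) ∈ S ∧ c ≠ 0 :=
    Set.exists_ne_of_one_lt_ncard (hcard ▸ Fintype.one_lt_card) 0
  refine ⟨c, hc, fun y ↦ ?_⟩
  have hsub : Set.range (algebraMap F K) ⊆ {y | (0, c * y) ∈ S} := by
    rintro _ ⟨t, rfl⟩
    rcases eq_or_ne t 0 with rfl | ht
    · simpa using hS.zero_mem
    · obtain ⟨μ, hμ⟩ := exists_pow_card_succ_eq_algebraMap (K := K) hrank t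
      have hμ0 : μ ≠ 0 := by
        rintro rfl
        exact ht (by simpa using hμ.symm)
      simpa [hμ, mul_comm] using hS.mul_mem hμ0 hcS
  have hle : {y | (0, c * y) ∈ S}.ncard ≤ (Set.range (algebraMap F K)).ncard := by
    rw [Set.ncard_range_of_injective (algebraMap F K).injective, Nat.card_eq_fintype_card]
    have := (hS.rescale hc).ncard_vertical 0
    simp only [Set.mem_ofPred_eq] at this
    omega
  exact (Set.ext_iff.1 (Set.eq_of_subset_of_ncard_le hsub hle) y).symm

open scoped Classical in
theorem isSlopeSet [Fintype K] (hS : IsDiagonalUnital q S)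
    (hzero : ∀ y, (0, y) ∈ S ↔ y ∈ Set.range (algebraMap F K)) :
    IsSlopeSet F {z : K | (1, z) ∈ S}.toFinset := by
  intro k hk
  have hline : ({x | (x, x + k) ∈ S}.toFinset.card : K) = 1 := by
    have hq : (q : K) = 0 := by
      rw [← map_natCast (algebraMap F K), FiniteField.cast_card_eq_zero, map_zero]
    have := hS.ncard_line 1 k
    simp only [one_mul] at this
    rw [← Set.ncard_eq_toFinset_card']
    obtain h | h := this <;> simp [h, hq]
  have zero_mem_line : 0 ∈ {x | (x, x + k) ∈ S}.toFinset ↔ k ∈ Set.range (algebraMap F K) := by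
    rw [Set.mem_toFinset, Set.mem_ofPred_eq, zero_add, hzero]
  rw [hS.card_slope_solutions hk]
  split_ifs with hkF
  · rw [← Finset.card_erase_add_one (zero_mem_line.2 hkF)] at hline
    simpa using hline
  · rw [Finset.erase_eq_of_notMem (mt zero_mem_line.1 hkF), hline]

theorem exists_sub_eq_mul_pow (hS : IsDiagonalUnital q S) (hrank : Module.finrank F K = 2)
    (hzero : ∀ y, (0, y) ∈ S ↔ y ∈ Set.range (algebraMap F K)) :
    ∃ δ ≠ 0, δ ^ q = -δ ∧ ∀ x y, (x, y) ∈ S ↔ y ^ q - y = δ * x ^ (q + 1) := by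
  classical
  have := finite_of_finrank_eq_two hrank
  let _ := Fintype.ofFinite K
  obtain ⟨a, ha⟩ := (hS.isSlopeSet hzero).eq_image_add hrank
    (by simpa only [← Set.ncard_eq_toFinset_card'] using hS.ncard_vertical 1)
  have mem_one_iff (z : K) : (1, z) ∈ S ↔ z ^ q - z = a ^ q - a := by
    have hcoset : (1, z) ∈ S ↔ z - a ∈ Set.range (algebraMap F K) := by
      have := Finset.ext_iff.1 ha z
      simpa [← eq_sub_iff_add_eq'] using this
    rw [hcoset, mem_range_algebraMap_iff_pow_card_eq hrank, sub_pow_card,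
      sub_eq_sub_iff_sub_eq_sub]
  refine ⟨a ^ q - a, fun h ↦ ?_, ?_, fun x y ↦ ?_⟩
  · have hq : q ≠ 0 := Fintype.card_ne_zero
    exact one_ne_zero (hS.eq_zero_of_mem ((mem_one_iff 0).2 (by simp [h, hq])))
  · rw [sub_pow_card, pow_card_pow_card hrank, neg_sub]
  · rcases eq_or_ne x 0 with rfl | hx
    · rw [hzero, mem_range_algebraMap_iff_pow_card_eq hrank, zero_pow (Nat.succ_ne_zero _),
        mul_zero, sub_eq_zero]
    · have hnorm : (x ^ (q + 1)) ^ q = x ^ (q + 1) := by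
        rw [pow_succ, mul_pow, pow_card_pow_card hrank, mul_comm]
      rw [← hS.mem_one_div_iff hx, mem_one_iff, div_pow, hnorm, ← sub_div,
        div_eq_iff (pow_ne_zero _ hx)]

theorem exists_hermitian_equation (hS : IsDiagonalUnital q S) (hrank : Module.finrank F K = 2) :
    ∃ b ≠ 0, ∀ x y, (x, y) ∈ S ↔ x ^ (q + 1) = b * y ^ q + b ^ q * y := by
  obtain ⟨c, hc, hzero⟩ := hS.exists_forall_zero_mul_mem_iff hrank
  obtain ⟨δ, hδ, hδq, hequation⟩ := (hS.rescale hc).exists_sub_eq_mul_pow hrank hzero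
  refine ⟨(c ^ q * δ)⁻¹, inv_ne_zero (mul_ne_zero (pow_ne_zero _ hc) hδ), fun x y ↦ ?_⟩
  have hxy : (x, y) ∈ S ↔ (y / c) ^ q - y / c = δ * x ^ (q + 1) := by
    rw [← hequation, Set.mem_ofPred_eq, mul_div_cancel₀ y hc]
  have hbq : ((c ^ q * δ)⁻¹) ^ q = -(c * δ)⁻¹ := by
    rw [inv_pow, mul_pow, pow_card_pow_card hrank, hδq, mul_neg, inv_neg]
  have hcq := pow_ne_zero q hc
  rw [hxy, hbq, div_pow]
  have : y ^ q / c ^ q - y / c = δ * ((c ^ q * δ)⁻¹ * y ^ q + -(c * δ)⁻¹ * y) := by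
    field_simp
    ring
  rw [this, mul_right_inj' hδ, eq_comm]

end IsDiagonalUnital

end QuadraticExtension

theorem exists_finrank_eq_of_card_eq_pow {K : Type*} [Field K] [Fintype K] {n m : ℕ} (hm : m ≠ 0)
    (hK : Fintype.card K = n ^ m) :
    ∃ (F : Type) (_ : Field F) (_ : Fintype F) (_ : Algebra F K),
      Fintype.card F = n ∧ Module.finrank F K = m := by
  obtain ⟨p, h, hp, hh, rfl⟩ := (isPrimePow_nat_iff n).1
    ((isPrimePow_pow_iff hm).1 (hK ▸ FiniteField.isPrimePow_card K))
  have := Fact.mk hp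
  have := NeZero.mk hm
  have := NeZero.mk hh.ne'
  let F := GaloisField p h
  have hcardF : Nat.card F = p ^ h := GaloisField.card p h hh.ne'
  let _ : Fintype F := Fintype.ofFinite F
  let _ : Fintype (FiniteField.Extension F p m) := Fintype.ofFinite _
  have hcard : Fintype.card (FiniteField.Extension F p m) = Fintype.card K := by
    rw [← Nat.card_eq_fintype_card, FiniteField.natCard_extension, hcardF, hK]
  let e := FiniteField.ringEquivOfCardEq hcard
  let _ : Algebra F K := (e.toRingHom.comp (algebraMap F _)).toAlgebra
  rw [Nat.card_eq_fintype_card] at hcardF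
  refine ⟨F, inferInstance, inferInstance, inferInstance, hcardF, ?_⟩
  refine Nat.pow_right_injective (Nat.one_lt_pow hh.ne' hp.one_lt) ?_
  exact (hcardF ▸ Module.card_eq_pow_finrank (K := F) (V := K)).symm.trans hK

section ProjectivePlane

variable {K : Type*} [Field K]

theorem submodule_mk_le_ker_iff {V : Type*} [AddCommGroup V] [Module K V] (f : Module.Dual K V)
    {v : V} (hv : v ≠ 0) : (mk K v hv).submodule ≤ LinearMap.ker f ↔ f v = 0 := by
  rw [submodule_mk, Submodule.span_singleton_le_iff_mem, LinearMap.mem_ker]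

/-- The point `(x : y : 1)` of the affine chart `X₃ ≠ 0`. -/
def affinePoint (x y : K) : PGPt K :=
  mk K ![x, y, 1] fun h ↦ one_ne_zero (congr_fun h 2)

variable (K) in
/-- The point `(0 : 1 : 0)` on all the vertical lines of the affine chart `X₃ ≠ 0`. -/
def verticalPoint : PGPt K :=
  mk K ![0, 1, 0] fun h ↦ one_ne_zero (congr_fun h 1)

theorem affinePoint_inj {x y x' y' : K} :
    affinePoint x y = affinePoint x' y' ↔ x = x' ∧ y = y' := by
  refine ⟨fun h ↦ ?_, fun ⟨hx, hy⟩ ↦ by rw [hx, hy]⟩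
  obtain ⟨c, hc⟩ := (mk_eq_mk_iff' ..).1 h
  obtain rfl : c = 1 := by simpa using congr_fun hc 2
  exact ⟨by simpa using (congr_fun hc 0).symm, by simpa using (congr_fun hc 1).symm⟩

theorem mk_eq_affinePoint {v : Fin 3 → K} (hv : v ≠ 0) (h2 : v 2 ≠ 0) :
    mk K v hv = affinePoint (v 0 / v 2) (v 1 / v 2) := by
  refine (mk_eq_mk_iff' ..).2 ⟨v 2, ?_⟩
  ext i
  fin_cases i <;> simp [mul_div_cancel₀ _ h2]

theorem mk_eq_verticalPoint_iff {v : Fin 3 → K} (hv : v ≠ 0) :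
    mk K v hv = verticalPoint K ↔ v 0 = 0 ∧ v 2 = 0 := by
  refine (mk_eq_mk_iff' ..).trans ⟨?_, fun ⟨h0, h2⟩ ↦ ⟨v 1, ?_⟩⟩
  · rintro ⟨c, rfl⟩
    simp
  · ext i
    fin_cases i <;> simp [h0, h2]

theorem affinePoint_ne_verticalPoint (x y : K) : affinePoint x y ≠ verticalPoint K :=
  fun h ↦ one_ne_zero ((mk_eq_verticalPoint_iff _).1 h).2

theorem projHom_diagEquiv_affinePoint (n : ℕ) (u : Kˣ) (x y : K) :
    projHom (diagEquiv n u) (affinePoint x y) = affinePoint (u * x) (u ^ (n + 1) * y) := by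
  refine (mk_eq_mk_iff' ..).2 ⟨1, ?_⟩
  ext i
  fin_cases i <;> simp [diagEquiv_apply]

variable {n : ℕ} {U : Set (PGPt K)}

theorem affinePoint_mem_of_mapsTo [Finite K] {u : Kˣ} (hu : ∀ x : Kˣ, x ∈ Subgroup.zpowers u)
    (hpres : Set.MapsTo (projHom (diagEquiv n u)) U U) {μ x y : K} (hμ : μ ≠ 0)
    (hxy : affinePoint x y ∈ U) : affinePoint (μ * x) (μ ^ (n + 1) * y) ∈ U := by
  have power (i : ℕ) : affinePoint (u ^ i * x) ((u ^ i) ^ (n + 1) * y) ∈ U := by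
    induction i with
    | zero => simpa using hxy
    | succ i ih =>
      have := hpres ih
      rw [projHom_diagEquiv_affinePoint] at this
      convert this using 2 <;> ring
  obtain ⟨i, hi⟩ := mem_powers_iff_mem_zpowers.2 (hu (Units.mk0 μ hμ))
  have hμi : (u : K) ^ i = μ := by simpa using congr_arg Units.val hi
  simpa only [hμi] using power i

theorem ncard_inter_ker (hlines : ∀ L : PGLn K,
      {P ∈ U | PGMem P L}.ncard = 1 ∨ {P ∈ U | PGMem P L}.ncard = n + 1)
    {f : Module.Dual K (Fin 3 → K)} (hf : f ≠ 0) :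
    {P ∈ U | P.submodule ≤ LinearMap.ker f}.ncard = 1 ∨
      {P ∈ U | P.submodule ≤ LinearMap.ker f}.ncard = n + 1 := by
  have hrank : Module.finrank K (LinearMap.ker f) = 2 := by
    have := Module.Dual.finrank_ker_add_one_of_ne_zero hf
    rw [Module.finrank_fin_fun] at this
    omega
  exact hlines ⟨LinearMap.ker f, hrank⟩

section TangentAtInfinity

variable (htang : {R ∈ U | R.submodule ≤ LinearMap.ker
  (LinearMap.proj 2 : (Fin 3 → K) →ₗ[K] K)} = {verticalPoint K})

include htang

theorem verticalPoint_mem : verticalPoint K ∈ U :=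
  (htang.ge rfl).1

theorem eq_verticalPoint_or_eq_affinePoint {P : PGPt K} (hP : P ∈ U) :
    P = verticalPoint K ∨ ∃ x y, P = affinePoint x y := by
  induction P using Projectivization.ind with | h v hv
  by_cases h2 : v 2 = 0
  · exact Or.inl (htang.le ⟨hP, (submodule_mk_le_ker_iff _ hv).2 h2⟩)
  · exact Or.inr ⟨_, _, mk_eq_affinePoint hv h2⟩

theorem mk_mem_iff_of_apply_two_eq_zero {v : Fin 3 → K} (hv : v ≠ 0) (h2 : v 2 = 0) :
    mk K v hv ∈ U ↔ v 0 = 0 := by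
  have : mk K v hv ∈ U ↔ mk K v hv = verticalPoint K :=
    ⟨fun h ↦ htang.le ⟨h, (submodule_mk_le_ker_iff _ hv).2 h2⟩,
      fun h ↦ h ▸ verticalPoint_mem htang⟩
  rw [this, mk_eq_verticalPoint_iff, and_iff_left h2]

theorem mk_mem_iff_of_affinePoint_mem_iff {b : K} (hn : n ≠ 0)
    (hmem : ∀ x y : K, affinePoint x y ∈ U ↔ x ^ (n + 1) = b * y ^ n + b ^ n * y)
    {v : Fin 3 → K} (hv : v ≠ 0) :
    mk K v hv ∈ U ↔ v 0 ^ (n + 1) = b * v 1 ^ n * v 2 + b ^ n * v 1 * v 2 ^ n := by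
  by_cases h2 : v 2 = 0
  · rw [mk_mem_iff_of_apply_two_eq_zero htang hv h2, h2]
    simp [hn]
  · have homogenize : v 2 ^ (n + 1) * (b * (v 1 / v 2) ^ n + b ^ n * (v 1 / v 2)) =
        b * v 1 ^ n * v 2 + b ^ n * v 1 * v 2 ^ n := by
      rw [div_pow]
      field_simp
      ring
    rw [mk_eq_affinePoint hv h2, hmem, ← homogenize, div_pow,
      div_eq_iff (pow_ne_zero _ h2), mul_comm (v 2 ^ (n + 1))]

variable (hlines : ∀ L : PGLn K,
  {P ∈ U | PGMem P L}.ncard = 1 ∨ {P ∈ U | PGMem P L}.ncard = n + 1)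

include hlines

theorem ncard_affine_line (m k : K) :
    {x | affinePoint x (m * x + k) ∈ U}.ncard = 1 ∨
      {x | affinePoint x (m * x + k) ∈ U}.ncard = n + 1 := by
  let f : Module.Dual K (Fin 3 → K) := m • .proj 0 + k • .proj 2 - .proj 1
  have f_apply (v : Fin 3 → K) : f v = m * v 0 + k * v 2 - v 1 := by simp [f]
  have himage : (fun x ↦ affinePoint x (m * x + k)) '' {x | affinePoint x (m * x + k) ∈ U} =
      {P ∈ U | P.submodule ≤ LinearMap.ker f} := by
    ext P
    constructor
    · rintro ⟨x, hx, rfl⟩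
      exact ⟨hx, (submodule_mk_le_ker_iff f _).2 (by simp [f_apply])⟩
    · rintro ⟨hP, hPf⟩
      obtain rfl | ⟨x, y, rfl⟩ := eq_verticalPoint_or_eq_affinePoint htang hP
      · simpa [f_apply] using (submodule_mk_le_ker_iff f _).1 hPf
      · obtain rfl : m * x + k = y := by
          simpa [f_apply, sub_eq_zero] using (submodule_mk_le_ker_iff f _).1 hPf
        exact ⟨x, hP, rfl⟩
  have hf : f ≠ 0 := fun h ↦ by
    simpa [f_apply] using LinearMap.congr_fun h ![0, 1, 0]
  rw [← Set.ncard_image_of_injective _ fun x x' h ↦ (affinePoint_inj.1 h).1, himage]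
  exact ncard_inter_ker hlines hf

theorem ncard_affine_vertical [Finite K] (x : K) :
    {y | affinePoint x y ∈ U}.ncard = 0 ∨ {y | affinePoint x y ∈ U}.ncard = n := by
  let f : Module.Dual K (Fin 3 → K) := .proj 0 - x • .proj 2
  have f_apply (v : Fin 3 → K) : f v = v 0 - x * v 2 := by simp [f]
  have hinsert : insert (verticalPoint K) (affinePoint x '' {y | affinePoint x y ∈ U}) =
      {P ∈ U | P.submodule ≤ LinearMap.ker f} := by
    ext P
    constructor
    · rintro (rfl | ⟨y, hy, rfl⟩)
      · exact ⟨verticalPoint_mem htang, (submodule_mk_le_ker_iff f _).2 (by simp [f_apply])⟩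
      · exact ⟨hy, (submodule_mk_le_ker_iff f _).2 (by simp [f_apply])⟩
    · rintro ⟨hP, hPf⟩
      obtain rfl | ⟨x', y, rfl⟩ := eq_verticalPoint_or_eq_affinePoint htang hP
      · exact Or.inl rfl
      · obtain rfl : x' = x := by
          simpa [f_apply, sub_eq_zero] using (submodule_mk_le_ker_iff f _).1 hPf
        exact Or.inr ⟨y, hP, rfl⟩
  have hnotMem : verticalPoint K ∉ affinePoint x '' {y | affinePoint x y ∈ U} :=
    fun ⟨y, _, h⟩ ↦ affinePoint_ne_verticalPoint x y h
  have hf : f ≠ 0 := fun h ↦ by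
    simpa [f_apply] using LinearMap.congr_fun h ![1, 0, 0]
  have := ncard_inter_ker hlines hf
  rw [← hinsert, Set.ncard_insert_of_notMem hnotMem,
    Set.ncard_image_of_injective _ fun y y' h ↦ (affinePoint_inj.1 h).2] at this
  omega

end TangentAtInfinity

theorem isDiagonalUnital_affine_part [Finite K] {u : Kˣ} (hu : ∀ x : Kˣ, x ∈ Subgroup.zpowers u)
    (hlines : ∀ L : PGLn K,
      {P ∈ U | PGMem P L}.ncard = 1 ∨ {P ∈ U | PGMem P L}.ncard = n + 1)
    (htangO : {R ∈ U | R.submodule ≤ LinearMap.ker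
      (LinearMap.proj 1 : (Fin 3 → K) →ₗ[K] K)} = {affinePoint 0 0})
    (htangY : {R ∈ U | R.submodule ≤ LinearMap.ker
      (LinearMap.proj 2 : (Fin 3 → K) →ₗ[K] K)} = {verticalPoint K})
    (hpres : Set.MapsTo (projHom (diagEquiv n u)) U U) :
    IsDiagonalUnital n {P : K × K | affinePoint P.1 P.2 ∈ U} where
  zero_mem := (htangO.ge rfl).1
  eq_zero_of_mem {x} hx :=
    (affinePoint_inj.1 (htangO.le ⟨hx, (submodule_mk_le_ker_iff _ _).2 (by simp)⟩)).1
  mul_mem hμ hxy := affinePoint_mem_of_mapsTo hu hpres hμ hxy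
  ncard_line := ncard_affine_line htangY hlines
  ncard_vertical := ncard_affine_vertical htangY hlines

end ProjectivePlane

theorem unital_fixed_by_diagonal_group_is_hermitian_general
    (q : ℕ) {K : Type*} [Field K] [Fintype K] (hK : Fintype.card K = q ^ 2)
    (u : Kˣ) (hu : ∀ x : Kˣ, x ∈ Subgroup.zpowers u) (U : Set (PGPt K))
    (hlines : ∀ L : PGLn K,
      {P ∈ U | PGMem P L}.ncard = 1 ∨ {P ∈ U | PGMem P L}.ncard = q + 1)
    (htangO : {R ∈ U | R.submodule ≤ LinearMap.ker
      (LinearMap.proj 1 : (Fin 3 → K) →ₗ[K] K)} = {affinePoint 0 0})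
    (htangY : {R ∈ U | R.submodule ≤ LinearMap.ker
      (LinearMap.proj 2 : (Fin 3 → K) →ₗ[K] K)} = {verticalPoint K})
    (hpres : Set.MapsTo (projHom (diagEquiv q u)) U U) :
    ∃ b : K, b ≠ 0 ∧
      U = {R : PGPt K | R.rep 0 ^ (q + 1)
        = b * R.rep 1 ^ q * R.rep 2 + b ^ q * R.rep 1 * R.rep 2 ^ q} := by
  obtain ⟨F, _, _, _, rfl, hrank⟩ := exists_finrank_eq_of_card_eq_pow two_ne_zero hK
  have hS := isDiagonalUnital_affine_part hu hlines htangO htangY hpres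
  obtain ⟨b, hb, hequation⟩ := hS.exists_hermitian_equation hrank
  refine ⟨b, hb, Set.ext fun R ↦ ?_⟩
  simpa only [R.mk_rep, Set.mem_ofPred_eq] using
    mk_mem_iff_of_affinePoint_mem_iff htangY Fintype.card_ne_zero hequation R.rep_nonzero

/-- A unital in `PG(2,q²)` through `O = (0:0:1)` and `Y∞ = (0:1:0)`, with tangent lines
`X₂ = 0` at `O` and `X₃ = 0` at `Y∞`, preserved by the projectivity `diag(λ, λ^{q+1}, 1)`
(`λ` a generator of `K*`), is a Hermitian curve `x₁^{q+1} = b·x₂^q·x₃ + b^q·x₂·x₃^q`;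
in particular it is a classical unital. -/
theorem unital_fixed_by_diagonal_group_is_hermitian
    (q : ℕ) (hq : IsPrimePow q) (hq2 : 2 < q)
    {K : Type*} [Field K] [Fintype K] (hK : Fintype.card K = q ^ 2)
    (u : Kˣ) (hu : ∀ x : Kˣ, x ∈ Subgroup.zpowers u)
    (U : Set (PGPt K)) (hU : IsUnital q U)
    (O Yinf : PGPt K)
    (hOdef : O = Projectivization.mk K ![0, 0, 1] (by
      intro hc; simpa using congr_fun hc 2))
    (hYdef : Yinf = Projectivization.mk K ![0, 1, 0] (by
      intro hc; simpa using congr_fun hc 1))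
    (hO : O ∈ U) (hY : Yinf ∈ U)
    (htangO : {R ∈ U | R.submodule ≤ LinearMap.ker
      (LinearMap.proj 1 : (Fin 3 → K) →ₗ[K] K)} = {O})
    (htangY : {R ∈ U | R.submodule ≤ LinearMap.ker
      (LinearMap.proj 2 : (Fin 3 → K) →ₗ[K] K)} = {Yinf})
    (hpres : (projHom (diagEquiv q u)) '' U = U) :
    ∃ b : K, b ≠ 0 ∧
      U = {R : PGPt K | R.rep 0 ^ (q + 1)
        = b * R.rep 1 ^ q * R.rep 2 + b ^ q * R.rep 1 * R.rep 2 ^ q} := by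
  subst hOdef hYdef
  exact unital_fixed_by_diagonal_group_is_hermitian_general q hK u hu U hU.2 htangO htangY
    (Set.mapsTo_iff_image_subset.2 hpres.le)
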